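/- Let B be a supersoluble brace. Then B has a finite chain of ideals {0} = I_{0,0} ≤ I_{0,1} ≤ … ≤ I_{0,ℓ} = I_{1,0} ≤ I_{1,1} ≤ … ≤ I_{1,m} = I_{2,0} ≤ I_{2,1} ≤ … ≤ I_{2,n} = B such that: (i) |I_{0,i+1}/I_{0,i}| is an odd prime for all 0 ≤ i < ℓ; (ii) |I_{0,i+1}/I_{0,i}| ≥ |I_{0,i+2}/I_{0,i+1}| for all 0 ≤ i < ℓ−1; (iii) I_{1,i+1}/I_{1,i} ⊆ Soc(B/I_{1,i}) and (I_{1,i+1}/I_{1,i},+) is infinite cyclic for all 0 ≤ i < m; (iv) |I_{2,i+1}/I_{2,i}| = 2 for all 0 ≤ i < n. -/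

import Mathlib

/-- A (skew left) brace: a set with an additive group structure (not necessarily abelian)
and a multiplicative group structure sharing the same identity, satisfying the skew
distributive law `a * (b + c) = a * b + -a + a * c`. -/
class SkewBrace (B : Type*) extends AddGroup B, Group B where
  one_eq_zero : (1 : B) = (0 : B)
  skew_distrib : ∀ a b c : B, a * (b + c) = a * b + -a + a * c

/-- A group is supersoluble if it has a finite chain of normal subgroups with all
factors cyclic. -/
def Group.IsSupersoluble (G : Type*) [Group G] : Prop :=
  ∃ (n : ℕ) (H : ℕ → Subgroup G),
    H 0 = ⊥ ∧ H n = ⊤ ∧ (∀ i, (H i).Normal) ∧ (∀ i, i < n → H i ≤ H (i + 1)) ∧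
    ∀ i, i < n → ∃ x ∈ H (i + 1), ∀ y ∈ H (i + 1), ∃ k : ℤ, (x ^ k)⁻¹ * y ∈ H i

namespace SkewBrace

variable {B : Type*} [SkewBrace B]

/-- `lam a b = -a + a * b`, i.e. `λ_a(b)`. -/
def lam (a b : B) : B := -a + a * b

/-- the star operation `a ∗ b = λ_a(b) - b`. -/
def starOp (a b : B) : B := lam a b + -b

/-- the additive commutator `[a,b]_+`. -/
def addCommutator (a b : B) : B := -a + -b + a + b

/-- A subbrace of `B`: a subset that is a subgroup of both `(B,+)` and `(B,·)`. -/
structure Subbrace (B : Type*) [SkewBrace B] where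
  carrier : Set B
  zero_mem : (0 : B) ∈ carrier
  add_mem : ∀ {a b : B}, a ∈ carrier → b ∈ carrier → a + b ∈ carrier
  neg_mem : ∀ {a : B}, a ∈ carrier → -a ∈ carrier
  mul_mem : ∀ {a b : B}, a ∈ carrier → b ∈ carrier → a * b ∈ carrier
  inv_mem : ∀ {a : B}, a ∈ carrier → a⁻¹ ∈ carrier

/-- An ideal of `B`: a subbrace that is normal in `(B,+)` and in `(B,·)` and is
invariant under all the maps `λ_b`. -/
structure BraceIdeal (B : Type*) [SkewBrace B] extends Subbrace B where
  addConj_mem : ∀ (b : B) {a : B}, a ∈ carrier → b + a + -b ∈ carrier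
  mulConj_mem : ∀ (b : B) {a : B}, a ∈ carrier → b * a * b⁻¹ ∈ carrier
  lam_mem : ∀ (b : B) {a : B}, a ∈ carrier → lam b a ∈ carrier

/-- The additive subgroup underlying a subbrace. -/
def Subbrace.addSubgroup (S : Subbrace B) : AddSubgroup B where
  carrier := S.carrier
  zero_mem' := S.zero_mem
  add_mem' := S.add_mem
  neg_mem' := S.neg_mem

/-- The multiplicative subgroup underlying a subbrace. -/
def Subbrace.subgroup (S : Subbrace B) : Subgroup B where
  carrier := S.carrier
  one_mem' := by rw [one_eq_zero]; exact S.zero_mem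
  mul_mem' := S.mul_mem
  inv_mem' := S.inv_mem

/-- Given ideals `J ≤ I` of `B`, `MemSocQuotRel I J x` says that the coset of `x`
lies in `Soc(I/J) = Ker(λ) ∩ Z(I/J, +)` (for `I = B` take `I = Set.univ`). -/
def MemSocQuotRel (I J : Set B) (x : B) : Prop :=
  x ∈ I ∧ (∀ y ∈ I, -y + lam x y ∈ J) ∧ ∀ y ∈ I, -(y + x) + (x + y) ∈ J

/-- Given ideals `J ≤ I` of `B`, `MemZetaQuotRel I J x` says that the coset of `x`
lies in `ζ(I/J) = Soc(I/J) ∩ Z(I/J, ·)`. -/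
def MemZetaQuotRel (I J : Set B) (x : B) : Prop :=
  MemSocQuotRel I J x ∧ ∀ y ∈ I, (y * x)⁻¹ * (x * y) ∈ J

/-- The coset of `x` lies in `Soc(B/J)`. -/
def MemSocQuot (J : Set B) (x : B) : Prop := MemSocQuotRel Set.univ J x

/-- The coset of `x` lies in `ζ(B/J)`. -/
def MemZetaQuot (J : Set B) (x : B) : Prop := MemZetaQuotRel Set.univ J x

/-- For ideals `I ≤ J`, the additive group of the quotient `J/I` is infinite cyclic. -/
def QuotAddInfCyclic (I J : Set B) : Prop :=
  ∃ x ∈ J, (∀ y ∈ J, ∃ n : ℤ, -(n • x) + y ∈ I) ∧ ∀ n : ℤ, n • x ∈ I → n = 0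

/-- For ideals `I ≤ J`, the quotient `J/I` has prime order `p`. -/
def QuotPrimeOrder (I J : Set B) (p : ℕ) : Prop :=
  p.Prime ∧ ∃ x ∈ J, x ∉ I ∧ p • x ∈ I ∧ ∀ y ∈ J, ∃ n : ℤ, -(n • x) + y ∈ I

/-- A brace is supersoluble if it has a finite chain of ideals each factor of which
either is additively infinite cyclic and contained in the socle of the corresponding
quotient, or has prime order. -/
def IsSupersoluble (B : Type*) [SkewBrace B] : Prop :=
  ∃ (n : ℕ) (I : ℕ → BraceIdeal B),
    (I 0).carrier = {0} ∧ (I n).carrier = Set.univ ∧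
    (∀ i, i < n → (I i).carrier ⊆ (I (i + 1)).carrier) ∧
    ∀ i, i < n →
      (QuotAddInfCyclic (I i).carrier (I (i + 1)).carrier ∧
        ∀ x ∈ (I (i + 1)).carrier, MemSocQuot (I i).carrier x) ∨
      ∃ p : ℕ, QuotPrimeOrder (I i).carrier (I (i + 1)).carrier p

/-- The upper socle series of the brace (carrier of the ideal) `I`. -/
def socChainRel (I : Set B) : ℕ → Set B
  | 0 => {0}
  | n + 1 => {x | MemSocQuotRel I (socChainRel I n) x}

/-- The upper central series of the brace (carrier of the ideal) `I`. -/
def zetaChainRel (I : Set B) : ℕ → Set B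
  | 0 => {0}
  | n + 1 => {x | MemZetaQuotRel I (zetaChainRel I n) x}

/-- The upper socle series `Soc_n(B)` of `B`. -/
def socChain (B : Type*) [SkewBrace B] : ℕ → Set B := socChainRel Set.univ

/-- The upper central series `ζ_n(B)` of `B`. -/
def zetaChain (B : Type*) [SkewBrace B] : ℕ → Set B := zetaChainRel Set.univ

/-- A brace is centrally nilpotent if its upper central series reaches `B`. -/
def IsCentrallyNilpotent (B : Type*) [SkewBrace B] : Prop :=
  ∃ m : ℕ, zetaChain B m = Set.univ

end SkewBrace

/-!
A chain witnessing supersolubility can be rearranged by exchanging adjacent factors. Working in the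
quotient by the smallest of the three ideals involved, the exchanges are the following.

* A factor of prime order `p` below one of prime order `q > p`: an ideal of order `p * q` has a
  unique Sylow `q`-subgroup both additively and multiplicatively. The two coincide and form an
  ideal of order `q`.
* An infinite cyclic socle factor `J` below a factor `K/J` of odd prime order `p`: `K` acts
  trivially on `J`, since `-1` has even order. If `K` is torsion-free, it is itself infinite cyclic
  and contained in the socle; otherwise its torsion elements form an ideal of order `p`
  complementing `J`.
* A factor `J` of order two below an infinite cyclic socle factor generated by the coset of `x`:
  `4x` belongs to the socle and generates an infinite cyclic ideal meeting `J` trivially, and the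
  price is two further factors of order two between `J + ⟨4x⟩` and `J + ⟨x⟩`.

Applying these exchanges as long as possible moves all odd primes to the bottom, in nonincreasing
order, and all factors of order two to the top.
-/

namespace SkewBrace

/-! ### Homomorphisms, ideals and quotients of braces -/

section Lambda

variable {B : Type*} [SkewBrace B]

theorem mul_eq_add_lam (a b : B) : a * b = a + lam a b := by
  rw [lam, add_neg_cancel_left]

theorem lam_add (a b c : B) : lam a (b + c) = lam a b + lam a c := by
  simp only [lam, skew_distrib, add_assoc]

theorem lam_zero (a : B) : lam a 0 = 0 := by
  rw [lam, ← one_eq_zero, mul_one, neg_add_cancel, one_eq_zero]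

theorem lam_one (b : B) : lam 1 b = b := by
  rw [lam, one_mul, one_eq_zero, neg_zero, zero_add]

theorem lam_mul (a b c : B) : lam (a * b) c = lam a (lam b c) := by
  have h : a * b + lam (a * b) c = a * b + lam a (lam b c) := by
    rw [← mul_eq_add_lam, mul_assoc, mul_eq_add_lam b c, mul_eq_add_lam a, lam_add, ← add_assoc,
      ← mul_eq_add_lam]
  exact add_left_cancel h

/-- The homomorphism `λ` from `(B, ·)` to the endomorphisms of `(B, +)`. -/
def lamHom (B : Type*) [SkewBrace B] : B →* AddMonoid.End B where
  toFun a := { toFun := lam a, map_zero' := lam_zero a, map_add' := lam_add a }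
  map_one' := AddMonoidHom.ext lam_one
  map_mul' a b := AddMonoidHom.ext (lam_mul a b)

theorem lam_neg (a b : B) : lam a (-b) = -lam a b :=
  map_neg (lamHom B a) b

theorem lam_zsmul (a : B) (n : ℤ) (b : B) : lam a (n • b) = n • lam a b :=
  map_zsmul (lamHom B a) n b

theorem lam_nsmul (a : B) (n : ℕ) (b : B) : lam a (n • b) = n • lam a b :=
  map_nsmul (lamHom B a) n b

theorem lam_inv_lam (a b : B) : lam a⁻¹ (lam a b) = b := by
  rw [← lam_mul, inv_mul_cancel, lam_one]

theorem lam_lam_inv (a b : B) : lam a (lam a⁻¹ b) = b := by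
  rw [← lam_mul, mul_inv_cancel, lam_one]

theorem lam_injective (a : B) : Function.Injective (lam a) :=
  Function.LeftInverse.injective (lam_inv_lam a)

theorem inv_eq_neg_lam (a : B) : a⁻¹ = -lam a⁻¹ a :=
  eq_neg_of_add_eq_zero_left (by rw [← mul_eq_add_lam, inv_mul_cancel, one_eq_zero])

theorem lam_inv_neg_add (a b : B) : lam a⁻¹ (-a + b) = a⁻¹ * b := by
  rw [lam_add, lam_neg, ← inv_eq_neg_lam, ← mul_eq_add_lam]

theorem pow_eq_nsmul_of_lam_self {x : B} (hx : lam x x = x) (n : ℕ) : x ^ n = n • x := by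
  induction n with
  | zero => rw [pow_zero, zero_nsmul, one_eq_zero]
  | succ n ih => rw [pow_succ', ih, mul_eq_add_lam, lam_nsmul, hx, succ_nsmul']

theorem lam_pow_eq_zsmul {b x : B} {c : ℤ} (h : lam b x = c • x) (n : ℕ) :
    lam (b ^ n) x = c ^ n • x := by
  induction n with
  | zero => rw [pow_zero, pow_zero, lam_one, one_zsmul]
  | succ n ih => rw [pow_succ', lam_mul, ih, lam_zsmul, h, pow_succ, mul_zsmul]

/-- The subbrace with underlying additive subgroup `S`: closure under multiplication is automatic
for a `λ`-invariant additive subgroup. -/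
def Subbrace.ofAddSubgroup (S : AddSubgroup B) (lam_mem : ∀ b, ∀ a ∈ S, lam b a ∈ S) :
    Subbrace B where
  carrier := S
  zero_mem := S.zero_mem
  add_mem := S.add_mem
  neg_mem := S.neg_mem
  mul_mem ha hb := mul_eq_add_lam (B := B) _ _ ▸ S.add_mem ha (lam_mem _ _ hb)
  inv_mem ha := inv_eq_neg_lam (B := B) _ ▸ S.neg_mem (lam_mem _ _ ha)

end Lambda

namespace BraceIdeal

variable {B : Type*} [SkewBrace B]

instance : SetLike (BraceIdeal B) B where
  coe I := I.carrier
  coe_injective := by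
    rintro ⟨⟨_, _, _, _, _, _⟩, _, _, _⟩ ⟨⟨_, _, _, _, _, _⟩, _, _, _⟩ rfl
    rfl

instance : PartialOrder (BraceIdeal B) := .ofSetLike (BraceIdeal B) B

instance : AddSubgroupClass (BraceIdeal B) B where
  add_mem {I} := I.add_mem
  zero_mem I := I.zero_mem
  neg_mem {I} := I.neg_mem

instance : SubgroupClass (BraceIdeal B) B where
  mul_mem {I} := I.mul_mem
  one_mem I := I.subgroup.one_mem
  inv_mem {I} := I.inv_mem

@[ext]
theorem ext {I J : BraceIdeal B} (h : ∀ x, x ∈ I ↔ x ∈ J) : I = J :=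
  SetLike.ext h

instance (I : BraceIdeal B) : I.addSubgroup.Normal :=
  ⟨fun _ ha b => I.addConj_mem b ha⟩

instance (I : BraceIdeal B) : I.subgroup.Normal :=
  ⟨fun _ ha b => I.mulConj_mem b ha⟩

theorem lam_mem_iff (I : BraceIdeal B) {b x : B} : lam b x ∈ I ↔ x ∈ I :=
  ⟨fun h => lam_inv_lam b x ▸ I.lam_mem b⁻¹ h, I.lam_mem b⟩

theorem neg_add_mem_iff_inv_mul_mem (I : BraceIdeal B) (a b : B) :
    -a + b ∈ I ↔ a⁻¹ * b ∈ I := by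
  rw [← lam_inv_neg_add, lam_mem_iff]

/-- The ideal with underlying additive subgroup `S`. -/
def ofAddSubgroup (S : AddSubgroup B) (addConj : ∀ b, ∀ a ∈ S, b + a + -b ∈ S)
    (mulConj : ∀ b, ∀ a ∈ S, b * a * b⁻¹ ∈ S) (lam_mem : ∀ b, ∀ a ∈ S, lam b a ∈ S) :
    BraceIdeal B where
  toSubbrace := .ofAddSubgroup S lam_mem
  addConj_mem b _ := addConj b _
  mulConj_mem b _ := mulConj b _
  lam_mem b _ := lam_mem b _

instance : OrderBot (BraceIdeal B) where
  bot := ofAddSubgroup ⊥ (by simp [AddSubgroup.mem_bot])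
    (by simp [AddSubgroup.mem_bot, ← one_eq_zero]) (by simp [AddSubgroup.mem_bot, lam_zero])
  bot_le I := by rintro _ rfl; exact I.zero_mem

theorem mem_bot {x : B} : x ∈ (⊥ : BraceIdeal B) ↔ x = 0 :=
  Iff.rfl

end BraceIdeal

section Hom

variable (B C : Type*) [SkewBrace B] [SkewBrace C]

/-- Homomorphisms of braces. -/
structure BraceHom extends B →+ C, B →* C

variable {B C}

namespace BraceHom

instance : FunLike (BraceHom B C) B C where
  coe f := f.toFun
  coe_injective := by
    rintro ⟨⟨⟨_, _⟩, _⟩, _, _⟩ ⟨⟨⟨_, _⟩, _⟩, _, _⟩ rfl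
    rfl

instance : AddMonoidHomClass (BraceHom B C) B C where
  map_add f := f.map_add'
  map_zero f := f.map_zero'

instance : MonoidHomClass (BraceHom B C) B C where
  map_mul f := f.map_mul'
  map_one f := f.map_one'

theorem map_lam (f : BraceHom B C) (a b : B) : f (lam a b) = lam (f a) (f b) := by
  simp only [lam, map_add, map_neg, map_mul]

end BraceHom

namespace BraceIdeal

/-- The preimage of an ideal under a brace homomorphism. -/
def comap (f : BraceHom B C) (I : BraceIdeal C) : BraceIdeal B :=
  ofAddSubgroup (I.addSubgroup.comap f)
    (fun b a (ha : f a ∈ I) => by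
      have h : f b + f a + -f b ∈ I := I.addConj_mem (f b) ha
      rwa [← map_neg, ← map_add, ← map_add] at h)
    (fun b a (ha : f a ∈ I) => by
      have h : f b * f a * (f b)⁻¹ ∈ I := I.mulConj_mem (f b) ha
      rwa [← map_inv, ← map_mul, ← map_mul] at h)
    (fun b a (ha : f a ∈ I) => by
      have h : lam (f b) (f a) ∈ I := I.lam_mem (f b) ha
      rwa [← f.map_lam] at h)

theorem mem_comap {f : BraceHom B C} {I : BraceIdeal C} {x : B} : x ∈ I.comap f ↔ f x ∈ I :=
  Iff.rfl

/-- The image of an ideal under a surjective brace homomorphism. -/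
def map (f : BraceHom B C) (hf : Function.Surjective f) (I : BraceIdeal B) : BraceIdeal C :=
  ofAddSubgroup (I.addSubgroup.map (f : B →+ C))
    (hf.forall.2 fun b => by
      rintro _ ⟨a, ha, rfl⟩
      exact ⟨b + a + -b, I.addConj_mem b ha, by simp⟩)
    (hf.forall.2 fun b => by
      rintro _ ⟨a, ha, rfl⟩
      exact ⟨b * a * b⁻¹, I.mulConj_mem b ha, by simp⟩)
    (hf.forall.2 fun b => by
      rintro _ ⟨a, ha, rfl⟩
      exact ⟨lam b a, I.lam_mem b ha, f.map_lam b a⟩)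

theorem comap_map (f : BraceHom B C) (hf : Function.Surjective f) {J : BraceIdeal B}
    (hJ : (⊥ : BraceIdeal C).comap f ≤ J) : (J.map f hf).comap f = J := by
  ext x
  refine ⟨?_, fun hx => ⟨x, hx, rfl⟩⟩
  rintro ⟨y, hy, hyx : f y = f x⟩
  have hker : f (-y + x) = 0 := by rw [map_add, map_neg, hyx, neg_add_cancel]
  rw [← add_neg_cancel_left y x]
  exact J.add_mem hy (hJ hker)

end BraceIdeal

end Hom

namespace BraceIdeal

section Quotient

variable {B : Type*} [SkewBrace B] (I : BraceIdeal B)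

instance : HasQuotient B (BraceIdeal B) where
  Quotient I := B ⧸ I.addSubgroup

instance : AddGroup (B ⧸ I) :=
  inferInstanceAs (AddGroup (B ⧸ I.addSubgroup))

/-- The additive and the multiplicative cosets of an ideal coincide. -/
def quotientEquiv : B ⧸ I ≃ B ⧸ I.subgroup :=
  Quotient.congr (ra := QuotientAddGroup.leftRel I.addSubgroup)
    (rb := QuotientGroup.leftRel I.subgroup) (Equiv.refl B) fun a b => by
    rw [QuotientAddGroup.leftRel_apply, Equiv.refl_apply, Equiv.refl_apply,
      QuotientGroup.leftRel_apply]
    exact I.neg_add_mem_iff_inv_mul_mem a b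

instance : Group (B ⧸ I) :=
  I.quotientEquiv.group

instance : SkewBrace (B ⧸ I) where
  one_eq_zero := congrArg (QuotientAddGroup.mk' I.addSubgroup) (one_eq_zero (B := B))
  skew_distrib := by
    rintro ⟨a⟩ ⟨b⟩ ⟨c⟩
    exact congrArg (QuotientAddGroup.mk' I.addSubgroup) (skew_distrib a b c)

/-- The canonical projection onto the quotient brace. -/
def quotientMk : BraceHom B (B ⧸ I) where
  __ := QuotientAddGroup.mk' I.addSubgroup
  map_one' := rfl
  map_mul' _ _ := rfl

theorem quotientMk_surjective : Function.Surjective I.quotientMk :=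
  QuotientAddGroup.mk'_surjective I.addSubgroup

theorem comap_quotientMk_bot : (⊥ : BraceIdeal (B ⧸ I)).comap I.quotientMk = I := by
  ext x
  exact QuotientAddGroup.eq_zero_iff (N := I.addSubgroup) x

theorem exists_comap_quotientMk_eq {I J : BraceIdeal B} (h : I ≤ J) :
    ∃ J' : BraceIdeal (B ⧸ I), J'.comap I.quotientMk = J :=
  ⟨J.map I.quotientMk I.quotientMk_surjective, comap_map _ _ (I.comap_quotientMk_bot.trans_le h)⟩

end Quotient

end BraceIdeal

/-! ### The socle and the factors of a chain -/

section Socle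

variable {B C : Type*} [SkewBrace B] [SkewBrace C]

theorem mul_mul_inv_eq_lam {b m : B} (hm : ∀ y, lam m y = y)
    (hbm : ∀ y, lam b m + y = y + lam b m) : b * m * b⁻¹ = lam b m := by
  have hker : b * m * b⁻¹ ∈ (lamHom B).ker :=
    (inferInstance : (lamHom B).ker.Normal).conj_mem m (AddMonoidHom.ext hm) b
  refine add_right_cancel (b := b) ?_
  calc b * m * b⁻¹ + b = b * m * b⁻¹ + lam (b * m * b⁻¹) b :=
        congrArg _ (DFunLike.congr_fun hker b).symm
    _ = b * m := by rw [← mul_eq_add_lam, inv_mul_cancel_right]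
    _ = lam b m + b := by rw [mul_eq_add_lam, hbm]

theorem lam_add_comm {m : B} (hm : ∀ y, m + y = y + m) (b y : B) :
    lam b m + y = y + lam b m := by
  rw [← lam_lam_inv b y, ← lam_add, hm, lam_add]

/-- The socle `Soc(B) = Ker(λ) ∩ Z(B, +)` of a brace. -/
def socle (B : Type*) [SkewBrace B] : BraceIdeal B :=
  have lam_mem {b m : B} (hm : (∀ y, lam m y = y) ∧ ∀ y, m + y = y + m) :
      (∀ y, lam (lam b m) y = y) ∧ ∀ y, lam b m + y = y + lam b m := by
    have hcomm := lam_add_comm hm.2 b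
    refine ⟨fun y => ?_, hcomm⟩
    rw [← mul_mul_inv_eq_lam hm.1 hcomm, lam_mul, lam_mul, hm.1, lam_lam_inv]
  .ofAddSubgroup
    { carrier := {x | (∀ y, lam x y = y) ∧ ∀ y, x + y = y + x}
      zero_mem' := ⟨fun y => by rw [← one_eq_zero, lam_one], fun y => by rw [zero_add, add_zero]⟩
      add_mem' {a b} ha hb :=
        ⟨fun y => by rw [← ha.1 b, ← mul_eq_add_lam, lam_mul, hb.1, ha.1],
          fun y => by rw [add_assoc, hb.2, ← add_assoc, ha.2, add_assoc]⟩
      neg_mem' {a} ha := by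
        refine ⟨fun y => ?_, fun y => ?_⟩
        · have hinv : a⁻¹ = -a := by rw [inv_eq_neg_lam, ← ha.1 (lam a⁻¹ a), lam_lam_inv]
          rw [← hinv, ← ha.1 (lam a⁻¹ y), lam_lam_inv]
        · exact (AddCommute.neg_left (ha.2 y)).eq }
    (fun b a ha => by rwa [← ha.2, add_neg_cancel_right])
    (fun b a ha => by
      rw [mul_mul_inv_eq_lam ha.1 (lam_add_comm ha.2 b)]
      exact lam_mem ha)
    (fun _ _ ha => lam_mem ha)

theorem mem_socle {x : B} : x ∈ socle B ↔ (∀ y, lam x y = y) ∧ ∀ y, x + y = y + x :=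
  Iff.rfl

theorem mul_mul_inv_of_mem_socle {m : B} (hm : m ∈ socle B) (b : B) : b * m * b⁻¹ = lam b m :=
  mul_mul_inv_eq_lam hm.1 (lam_add_comm hm.2 b)

namespace BraceIdeal

/-- A `λ`-invariant additive subgroup of the socle, viewed as an ideal. -/
def ofLeSocle (S : AddSubgroup B) (hS : S ≤ (socle B).addSubgroup)
    (lam_mem : ∀ b, ∀ a ∈ S, lam b a ∈ S) : BraceIdeal B :=
  ofAddSubgroup S (fun b a ha => by rwa [← (hS ha).2, add_neg_cancel_right])
    (fun b a ha => by rw [mul_mul_inv_of_mem_socle (hS ha)]; exact lam_mem b a ha) lam_mem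

/-- The ideal of `B` whose quotient by `I` is `Soc(B/I)`. -/
def socleMod (I : BraceIdeal B) : BraceIdeal B :=
  (socle (B ⧸ I)).comap I.quotientMk

theorem memSocQuot_comap_iff {f : BraceHom B C} (hf : Function.Surjective f) {I : BraceIdeal C}
    {x : B} : MemSocQuot (I.comap f).carrier x ↔ MemSocQuot I.carrier (f x) := by
  have hmem (z : B) : z ∈ (I.comap f).carrier ↔ f z ∈ I.carrier := Iff.rfl
  simp only [MemSocQuot, MemSocQuotRel, hf.forall, hmem, Set.mem_univ, true_imp_iff, map_add,
    map_neg, f.map_lam]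

theorem memSocQuot_bot_iff {x : B} : MemSocQuot (⊥ : BraceIdeal B).carrier x ↔ x ∈ socle B := by
  have hmem (z : B) : z ∈ (⊥ : BraceIdeal B).carrier ↔ z = 0 := Iff.rfl
  simp only [MemSocQuot, MemSocQuotRel, mem_socle, hmem, Set.mem_univ, true_imp_iff, true_and,
    neg_add_eq_zero]
  simp only [eq_comm]

theorem mem_socleMod {I : BraceIdeal B} {x : B} : x ∈ I.socleMod ↔ MemSocQuot I.carrier x := by
  rw [socleMod, mem_comap, ← memSocQuot_bot_iff, ← memSocQuot_comap_iff I.quotientMk_surjective,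
    comap_quotientMk_bot]

theorem le_socleMod (I : BraceIdeal B) : I ≤ I.socleMod := by
  intro x hx
  rw [← I.comap_quotientMk_bot, mem_comap, mem_bot] at hx
  rw [socleMod, mem_comap, hx]
  exact zero_mem _

theorem socleMod_mono {I J : BraceIdeal B} (h : I ≤ J) : I.socleMod ≤ J.socleMod := by
  intro x hx
  rw [mem_socleMod] at hx ⊢
  exact ⟨hx.1, fun y hy => h (hx.2.1 y hy), fun y hy => h (hx.2.2 y hy)⟩

theorem socleMod_bot : (⊥ : BraceIdeal B).socleMod = socle B := by
  ext x
  rw [mem_socleMod, memSocQuot_bot_iff]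

theorem socleMod_comap {f : BraceHom B C} (hf : Function.Surjective f) (I : BraceIdeal C) :
    (I.comap f).socleMod = I.socleMod.comap f := by
  ext x
  rw [mem_comap, mem_socleMod, mem_socleMod, memSocQuot_comap_iff hf]

theorem comap_le_comap_iff {f : BraceHom B C} (hf : Function.Surjective f) {I J : BraceIdeal C} :
    I.comap f ≤ J.comap f ↔ I ≤ J :=
  hf.preimage_subset_preimage_iff

end BraceIdeal

end Socle

section PrimeIndex

variable {G : Type*} [AddGroup G]

theorem index_eq_prime_iff (N : AddSubgroup G) [N.Normal] {p : ℕ} (hp : p.Prime) :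
    N.index = p ↔ ∃ x, x ∉ N ∧ p • x ∈ N ∧ ∀ y, ∃ n : ℤ, -(n • x) + y ∈ N := by
  have : Fact p.Prime := ⟨hp⟩
  constructor
  · intro hN
    have hcard : Nat.card (G ⧸ N) = p := hN
    obtain ⟨x, hx⟩ := SetLike.exists_not_mem_of_ne_top N
      (fun h => hp.ne_one (by rw [← hN, h, AddSubgroup.index_top])) rfl
    refine ⟨x, hx, hN ▸ N.nsmul_index_mem x, fun y => ?_⟩
    have hx0 : (x : G ⧸ N) ≠ 0 := mt (QuotientAddGroup.eq_zero_iff x).1 hx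
    obtain ⟨n, hn⟩ := mem_zmultiples_of_prime_card hcard hx0 (g' := (y : G ⧸ N))
    exact ⟨n, QuotientAddGroup.eq.1 hn⟩
  · rintro ⟨x, hx, hpx, hgen⟩
    have horder : addOrderOf (x : G ⧸ N) = p :=
      addOrderOf_eq_prime ((QuotientAddGroup.eq_zero_iff _).2 hpx)
        (mt (QuotientAddGroup.eq_zero_iff x).1 hx)
    have htop : AddSubgroup.zmultiples (x : G ⧸ N) = ⊤ := by
      refine (AddSubgroup.eq_top_iff' _).2 fun z => ?_
      induction z using QuotientAddGroup.induction_on with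
      | H y =>
        obtain ⟨n, hn⟩ := hgen y
        exact ⟨n, QuotientAddGroup.eq.2 hn⟩
    rw [AddSubgroup.index, ← AddSubgroup.card_top, ← htop, Nat.card_zmultiples, horder]

theorem relIndex_eq_prime_iff (N H : AddSubgroup G) [N.Normal] {p : ℕ} (hp : p.Prime) :
    N.relIndex H = p ↔
      ∃ x ∈ H, x ∉ N ∧ p • x ∈ N ∧ ∀ y ∈ H, ∃ n : ℤ, -(n • x) + y ∈ N := by
  rw [AddSubgroup.relIndex, index_eq_prime_iff _ hp]
  simp only [AddSubgroup.mem_addSubgroupOf, Subtype.exists, Subtype.forall, AddSubgroup.coe_add,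
    NegMemClass.coe_neg, AddSubgroupClass.coe_zsmul, AddSubmonoidClass.coe_nsmul, exists_prop]

theorem sup_eq_of_relIndex_prime {H K T : AddSubgroup G} (hHK : H ≤ K)
    (hprime : (H.relIndex K).Prime) (hTK : T ≤ K) (hTH : ¬T ≤ H) : H ⊔ T = K := by
  have hmul := AddSubgroup.relIndex_mul_relIndex H (H ⊔ T) K le_sup_left (sup_le hHK hTK)
  have hne : H.relIndex (H ⊔ T) ≠ 1 := by
    rwa [Ne, AddSubgroup.relIndex_eq_one, sup_le_iff, not_and_or, or_iff_right (by simp)]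
  have hone : (H ⊔ T).relIndex K = 1 :=
    ((Nat.prime_mul_iff.1 (hmul ▸ hprime)).resolve_right fun h => hne h.2).2
  exact le_antisymm (sup_le hHK hTK) (AddSubgroup.relIndex_eq_one.1 hone)

end PrimeIndex

namespace BraceIdeal

variable {B C : Type*} [SkewBrace B] [SkewBrace C]

/-- `I ≤ J` are consecutive terms of a chain whose factor `J/I` has prime order `p`. -/
structure PrimeStep (p : ℕ) (I J : BraceIdeal B) : Prop where
  le : I ≤ J
  prime : p.Prime
  relIndex_eq : I.addSubgroup.relIndex J.addSubgroup = p

/-- `I ≤ J` are consecutive terms of a chain whose factor `J/I` is contained in `Soc(B/I)` and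
additively infinite cyclic, generated by the coset of `x`. -/
structure SocleStep (x : B) (I J : BraceIdeal B) : Prop where
  le : I ≤ J
  le_socleMod : J ≤ I.socleMod
  mem : x ∈ J
  exists_zsmul : ∀ y ∈ J, ∃ n : ℤ, -(n • x) + y ∈ I
  eq_zero_of_zsmul_mem : ∀ n : ℤ, n • x ∈ I → n = 0

/-- `SocleStep` for some generator of the factor. -/
def InfCyclicStep (I J : BraceIdeal B) : Prop :=
  ∃ x, SocleStep x I J

theorem primeStep_iff {p : ℕ} {I J : BraceIdeal B} :
    PrimeStep p I J ↔ I ≤ J ∧ QuotPrimeOrder I.carrier J.carrier p := by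
  constructor
  · rintro ⟨hle, hp, hindex⟩
    exact ⟨hle, hp, (relIndex_eq_prime_iff I.addSubgroup J.addSubgroup hp).1 hindex⟩
  · rintro ⟨hle, hp, h⟩
    exact ⟨hle, hp, (relIndex_eq_prime_iff I.addSubgroup J.addSubgroup hp).2 h⟩

theorem infCyclicStep_iff {I J : BraceIdeal B} :
    InfCyclicStep I J ↔ I ≤ J ∧ QuotAddInfCyclic I.carrier J.carrier ∧
      ∀ x ∈ J.carrier, MemSocQuot I.carrier x := by
  constructor
  · rintro ⟨x, h⟩
    exact ⟨h.le, ⟨x, h.mem, h.exists_zsmul, h.eq_zero_of_zsmul_mem⟩,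
      fun y hy => mem_socleMod.1 (h.le_socleMod hy)⟩
  · rintro ⟨hle, ⟨x, hx, hgen, hfree⟩, hsoc⟩
    exact ⟨x, hle, fun y hy => mem_socleMod.2 (hsoc y hy), hx, hgen, hfree⟩

section Comap

variable {f : BraceHom B C} {p : ℕ} {x : B} {I J : BraceIdeal C}

theorem primeStep_comap_iff (hf : Function.Surjective f) :
    PrimeStep p (I.comap f) (J.comap f) ↔ PrimeStep p I J := by
  have hindex : (I.comap f).addSubgroup.relIndex (J.comap f).addSubgroup =
      I.addSubgroup.relIndex J.addSubgroup :=
    (AddSubgroup.relIndex_comap I.addSubgroup (f : B →+ C) _).trans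
      (congrArg _ (AddSubgroup.map_comap_eq_self_of_surjective hf J.addSubgroup))
  exact ⟨fun h => ⟨(comap_le_comap_iff hf).1 h.le, h.prime, hindex ▸ h.relIndex_eq⟩,
    fun h => ⟨(comap_le_comap_iff hf).2 h.le, h.prime, hindex ▸ h.relIndex_eq⟩⟩

theorem socleStep_comap_iff (hf : Function.Surjective f) :
    SocleStep x (I.comap f) (J.comap f) ↔ SocleStep (f x) I J := by
  have hgen : (∀ y ∈ J.comap f, ∃ n : ℤ, -(n • x) + y ∈ I.comap f) ↔
      ∀ y ∈ J, ∃ n : ℤ, -(n • f x) + y ∈ I := by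
    simp only [hf.forall, mem_comap, map_add, map_neg, map_zsmul]
  have hfree : (∀ n : ℤ, n • x ∈ I.comap f → n = 0) ↔ ∀ n : ℤ, n • f x ∈ I → n = 0 := by
    simp only [mem_comap, map_zsmul]
  have hsoc : J.comap f ≤ (I.comap f).socleMod ↔ J ≤ I.socleMod := by
    rw [socleMod_comap hf, comap_le_comap_iff hf]
  exact ⟨fun ⟨h₁, h₂, h₃, h₄, h₅⟩ =>
      ⟨(comap_le_comap_iff hf).1 h₁, hsoc.1 h₂, h₃, hgen.1 h₄, hfree.1 h₅⟩,
    fun ⟨h₁, h₂, h₃, h₄, h₅⟩ =>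
      ⟨(comap_le_comap_iff hf).2 h₁, hsoc.2 h₂, h₃, hgen.2 h₄, hfree.2 h₅⟩⟩

theorem infCyclicStep_comap_iff (hf : Function.Surjective f) :
    InfCyclicStep (I.comap f) (J.comap f) ↔ InfCyclicStep I J := by
  simp only [InfCyclicStep, socleStep_comap_iff hf, hf.exists]

end Comap

section ComapQuotient

variable {p : ℕ} {I : BraceIdeal B} {x : B} {J : BraceIdeal (B ⧸ I)}

theorem primeStep_comap_quotientMk_iff :
    PrimeStep p I (J.comap I.quotientMk) ↔ PrimeStep p ⊥ J := by
  rw [← primeStep_comap_iff I.quotientMk_surjective, comap_quotientMk_bot]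

theorem socleStep_comap_quotientMk_iff :
    SocleStep x I (J.comap I.quotientMk) ↔ SocleStep (I.quotientMk x) ⊥ J := by
  rw [← socleStep_comap_iff I.quotientMk_surjective, comap_quotientMk_bot]

theorem infCyclicStep_comap_quotientMk_iff :
    InfCyclicStep I (J.comap I.quotientMk) ↔ InfCyclicStep ⊥ J := by
  rw [← infCyclicStep_comap_iff I.quotientMk_surjective, comap_quotientMk_bot]

end ComapQuotient

theorem socleStep_bot_iff {x : B} {J : BraceIdeal B} :
    SocleStep x ⊥ J ↔
      J.addSubgroup = AddSubgroup.zmultiples x ∧ addOrderOf x = 0 ∧ x ∈ socle B := by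
  have hfree : addOrderOf x = 0 ↔ ∀ n : ℤ, n • x = 0 → n = 0 := by
    rw [addOrderOf_eq_zero_iff, isOfFinAddOrder_iff_zsmul_eq_zero]
    grind
  rw [hfree]
  constructor
  · rintro ⟨-, hsoc, hx, hgen, hfree⟩
    refine ⟨le_antisymm (fun y hy => ?_) ?_, hfree, socleMod_bot (B := B) ▸ hsoc hx⟩
    · obtain ⟨n, hn⟩ := hgen y hy
      exact ⟨n, neg_add_eq_zero.1 hn⟩
    · exact (AddSubgroup.zmultiples_le_of_mem (H := J.addSubgroup) hx)
  · rintro ⟨hJ, hfree, hx⟩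
    have hmem (y : B) : y ∈ J ↔ y ∈ AddSubgroup.zmultiples x := by rw [← hJ]; rfl
    refine ⟨bot_le, fun y hy => ?_, (hmem x).2 (AddSubgroup.mem_zmultiples x), fun y hy => ?_,
      hfree⟩
    · rw [socleMod_bot]
      obtain ⟨n, rfl⟩ := (hmem y).1 hy
      exact zsmul_mem hx n
    · obtain ⟨n, rfl⟩ := (hmem y).1 hy
      exact ⟨n, neg_add_cancel _⟩

/-! ### Second isomorphism theorem for the factors -/

theorem primeStep_iff_of_inf_of_sup {p : ℕ} {I J T K : BraceIdeal B}
    (hinf : J.addSubgroup ⊓ T.addSubgroup = I.addSubgroup)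
    (hsup : J.addSubgroup ⊔ T.addSubgroup = K.addSubgroup) :
    PrimeStep p I J ↔ PrimeStep p T K := by
  have hIJ : I ≤ J := fun x hx => (hinf.ge hx).1
  have hTK : T ≤ K := fun x hx => hsup.le (AddSubgroup.mem_sup_right hx)
  have hindex : I.addSubgroup.relIndex J.addSubgroup =
      T.addSubgroup.relIndex K.addSubgroup := by
    rw [← hinf, ← hsup, AddSubgroup.inf_relIndex_left, AddSubgroup.relIndex_sup_right]
  exact ⟨fun h => ⟨hTK, h.prime, hindex ▸ h.relIndex_eq⟩,
    fun h => ⟨hIJ, h.prime, hindex ▸ h.relIndex_eq⟩⟩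

theorem SocleStep.of_inf_of_sup {x : B} {I J T K : BraceIdeal B} (h : SocleStep x I J)
    (hinf : J.addSubgroup ⊓ T.addSubgroup = I.addSubgroup)
    (hsup : J.addSubgroup ⊔ T.addSubgroup = K.addSubgroup) : SocleStep x T K where
  le y hy := hsup.le (AddSubgroup.mem_sup_right hy)
  le_socleMod := by
    have hIT : I ≤ T := fun y hy => (hinf.ge hy).2
    have hJ : J.addSubgroup ≤ T.socleMod.addSubgroup := h.le_socleMod.trans (socleMod_mono hIT)
    exact hsup.ge.trans (sup_le hJ T.le_socleMod)
  mem := hsup.le (AddSubgroup.mem_sup_left h.mem)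
  exists_zsmul y hy := by
    obtain ⟨j, hj, t, ht, rfl⟩ := AddSubgroup.mem_sup_of_normal_left.1 (hsup.ge hy)
    obtain ⟨n, hn⟩ := h.exists_zsmul j hj
    refine ⟨n, ?_⟩
    rw [← add_assoc]
    exact add_mem (hinf.ge hn).2 ht
  eq_zero_of_zsmul_mem n hn :=
    h.eq_zero_of_zsmul_mem n (hinf.le ⟨zsmul_mem h.mem n, hn⟩)

theorem PrimeStep.sup_eq {p : ℕ} {J K : BraceIdeal B} (h : PrimeStep p J K) {T : AddSubgroup B}
    (hTK : T ≤ K.addSubgroup) (hTJ : ¬T ≤ J.addSubgroup) :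
    J.addSubgroup ⊔ T = K.addSubgroup :=
  sup_eq_of_relIndex_prime h.le (h.relIndex_eq ▸ h.prime) hTK hTJ

end BraceIdeal

/-! ### Exchanging two factors of prime order -/

section CardMulPrimes

theorem mem_iff_pow_card_eq_one {G : Type*} [Group G] {S : Subgroup G} [S.Normal]
    (h : (Nat.card S).Coprime S.index) {g : G} : g ∈ S ↔ g ^ Nat.card S = 1 := by
  constructor
  · intro hg
    exact congrArg Subtype.val (pow_card_eq_one' (x := (⟨g, hg⟩ : S)))
  · intro hg
    have hcard : (g : G ⧸ S) ^ Nat.card S = 1 := by rw [← QuotientGroup.mk_pow, hg]; rfl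
    have hindex : (g : G ⧸ S) ^ S.index = 1 := pow_card_eq_one'
    have horder := Nat.dvd_gcd (orderOf_dvd_of_pow_eq_one hcard)
      (orderOf_dvd_of_pow_eq_one hindex)
    rw [h, Nat.dvd_one, orderOf_eq_one_iff] at horder
    exact (QuotientGroup.eq_one_iff g).1 horder

variable {p q : ℕ}

theorem minFac_mul_of_prime_of_lt (hp : p.Prime) (hq : q.Prime) (hpq : p < q) :
    (p * q).minFac = p := by
  have hne : p * q ≠ 1 := fun h => hp.ne_one (Nat.eq_one_of_mul_eq_one_right h)
  refine le_antisymm (Nat.minFac_le_of_dvd hp.two_le (Nat.dvd_mul_right p q)) ?_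
  rcases (Nat.minFac_prime hne).dvd_mul.1 (Nat.minFac_dvd _) with h | h
  · exact ((Nat.prime_dvd_prime_iff_eq (Nat.minFac_prime hne) hp).1 h).ge
  · exact hpq.le.trans ((Nat.prime_dvd_prime_iff_eq (Nat.minFac_prime hne) hq).1 h).ge

theorem exists_subgroup_mem_iff_pow_eq_one {G : Type*} [Group G] (hp : p.Prime) (hq : q.Prime)
    (hpq : p < q) (hG : Nat.card G = p * q) :
    ∃ S : Subgroup G, Nat.card S = q ∧ ∀ g, g ∈ S ↔ g ^ q = 1 := by
  have : Fact q.Prime := ⟨hq⟩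
  have : Finite G := Nat.finite_of_card_ne_zero (hG ▸ mul_ne_zero hp.ne_zero hq.ne_zero)
  obtain ⟨S, hS⟩ := Sylow.exists_subgroup_card_pow_prime (G := G) q (n := 1)
    (by rw [hG, pow_one]; exact Nat.dvd_mul_left q p)
  rw [pow_one] at hS
  have hindex : S.index = p := by
    have h := S.card_mul_index
    rw [hS, hG, mul_comm p q] at h
    exact Nat.eq_of_mul_eq_mul_left hq.pos h
  have : S.Normal := Subgroup.normal_of_index_eq_minFac_card
    (by rw [hindex, hG, minFac_mul_of_prime_of_lt hp hq hpq])
  have hcop : (Nat.card S).Coprime S.index := by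
    rw [hS, hindex]
    exact (Nat.coprime_primes hq hp).2 hpq.ne'
  exact ⟨S, hS, fun g => by rw [mem_iff_pow_card_eq_one hcop, hS]⟩

theorem exists_subgroup_mem_iff_mem_and_pow_eq_one {G : Type*} [Group G] (hp : p.Prime)
    (hq : q.Prime) (hpq : p < q) (K : Subgroup G) (hK : Nat.card K = p * q) :
    ∃ S : Subgroup G, Nat.card S = q ∧ ∀ g, g ∈ S ↔ g ∈ K ∧ g ^ q = 1 := by
  obtain ⟨S, hS, hmem⟩ := exists_subgroup_mem_iff_pow_eq_one hp hq hpq hK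
  refine ⟨S.map K.subtype, (Subgroup.card_map_of_injective K.subtype_injective).trans hS,
    fun g => ?_⟩
  simp [Subgroup.mem_map, hmem, Subtype.ext_iff, and_comm]

theorem exists_addSubgroup_mem_iff_mem_and_nsmul_eq_zero {G : Type*} [AddGroup G] (hp : p.Prime)
    (hq : q.Prime) (hpq : p < q) (K : AddSubgroup G) (hK : Nat.card K = p * q) :
    ∃ S : AddSubgroup G, Nat.card S = q ∧ ∀ g, g ∈ S ↔ g ∈ K ∧ q • g = 0 := by
  obtain ⟨S, hS, hmem⟩ := exists_subgroup_mem_iff_mem_and_pow_eq_one (G := Multiplicative G)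
    hp hq hpq (AddSubgroup.toSubgroup K) hK
  exact ⟨Subgroup.toAddSubgroup' S, hS, hmem⟩

end CardMulPrimes

namespace BraceIdeal

variable {B : Type*} [SkewBrace B]

theorem primeStep_bot_iff {p : ℕ} {J : BraceIdeal B} :
    PrimeStep p ⊥ J ↔ p.Prime ∧ Nat.card J.addSubgroup = p := by
  have hcard : (⊥ : BraceIdeal B).addSubgroup.relIndex J.addSubgroup = Nat.card J.addSubgroup :=
    AddSubgroup.relIndex_bot_left J.addSubgroup
  exact ⟨fun h => ⟨h.prime, hcard ▸ h.relIndex_eq⟩, fun h => ⟨bot_le, h.1, hcard.trans h.2⟩⟩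

/-- In a group of order `p * q` with `p < q` the elements of order dividing `q` form a normal
subgroup. The additive and the multiplicative one coincide, because the additive one is also a
multiplicative subgroup of order `q`. -/
theorem exists_card_eq_of_card_eq_mul {p q : ℕ} (hp : p.Prime) (hq : q.Prime) (hpq : p < q)
    (K : BraceIdeal B) (hK : Nat.card K.addSubgroup = p * q) :
    ∃ S : BraceIdeal B, S ≤ K ∧ Nat.card S.addSubgroup = q := by
  obtain ⟨S, hS, hmemS⟩ := exists_addSubgroup_mem_iff_mem_and_nsmul_eq_zero hp hq hpq _ hK
  obtain ⟨T, hT, hmemT⟩ := exists_subgroup_mem_iff_mem_and_pow_eq_one hp hq hpq K.subgroup hK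
  have hlam (b s : B) (hs : s ∈ S) : lam b s ∈ S := by
    obtain ⟨hsK, hqs⟩ := (hmemS s).1 hs
    exact (hmemS _).2 ⟨K.lam_mem b hsK, by rw [← lam_nsmul, hqs, lam_zero]⟩
  have haddConj (b s : B) (hs : s ∈ S) : b + s + -b ∈ S := by
    obtain ⟨hsK, hqs⟩ := (hmemS s).1 hs
    exact (hmemS _).2 ⟨K.addConj_mem b hsK, by
      rw [addConj_nsmul, hqs, add_zero, add_neg_cancel]⟩
  have hST : (Subbrace.ofAddSubgroup S hlam).subgroup = T := by
    have : Finite T := Nat.finite_of_card_ne_zero (hT ▸ hq.ne_zero)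
    refine Subgroup.eq_of_le_of_card_ge (fun s hs => (hmemT s).2 ⟨((hmemS s).1 hs).1, ?_⟩)
      (hT.trans hS.symm).le
    rw [← hS]
    exact congrArg Subtype.val
      (pow_card_eq_one' (x := (⟨s, hs⟩ : (Subbrace.ofAddSubgroup S hlam).subgroup)))
  have hmulConj (b s : B) (hs : s ∈ S) : b * s * b⁻¹ ∈ S := by
    obtain ⟨hsK, hqs⟩ := (hmemT s).1 (hST.le hs)
    exact hST.ge ((hmemT _).2 ⟨K.mulConj_mem b hsK, by
      rw [conj_pow, hqs, mul_one, mul_inv_cancel]⟩)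
  exact ⟨.ofAddSubgroup S haddConj hmulConj hlam, fun s hs => ((hmemS s).1 hs).1, hS⟩

theorem PrimeStep.exists_swap {p q : ℕ} {I J K : BraceIdeal B} (hIJ : PrimeStep p I J)
    (hJK : PrimeStep q J K) (hpq : p < q) :
    ∃ J' : BraceIdeal B, PrimeStep q I J' ∧ PrimeStep p J' K := by
  have hIK := hIJ.le.trans hJK.le
  obtain ⟨J, rfl⟩ := exists_comap_quotientMk_eq hIJ.le
  obtain ⟨K, rfl⟩ := exists_comap_quotientMk_eq hIK
  rw [primeStep_comap_quotientMk_iff, primeStep_bot_iff] at hIJ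
  rw [primeStep_comap_iff I.quotientMk_surjective] at hJK
  have hcard := AddSubgroup.relIndex_mul_relIndex ⊥ J.addSubgroup K.addSubgroup bot_le hJK.le
  rw [AddSubgroup.relIndex_bot_left, AddSubgroup.relIndex_bot_left, hIJ.2,
    hJK.relIndex_eq] at hcard
  obtain ⟨S, hSK, hS⟩ := exists_card_eq_of_card_eq_mul hIJ.1 hJK.prime hpq K hcard.symm
  refine ⟨S.comap I.quotientMk,
    primeStep_comap_quotientMk_iff.2 (primeStep_bot_iff.2 ⟨hJK.prime, hS⟩),
    (primeStep_comap_iff I.quotientMk_surjective).2 ⟨hSK, hIJ.1, ?_⟩⟩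
  have hcard' := AddSubgroup.relIndex_mul_relIndex ⊥ S.addSubgroup K.addSubgroup bot_le hSK
  rw [AddSubgroup.relIndex_bot_left, AddSubgroup.relIndex_bot_left, hS, ← hcard,
    mul_comm] at hcard'
  exact Nat.eq_of_mul_eq_mul_right hJK.prime.pos hcard'

/-! ### Exchanging an infinite cyclic factor and a factor of odd prime order -/

theorem relIndex_subgroup (I J : BraceIdeal B) :
    I.subgroup.relIndex J.subgroup = I.addSubgroup.relIndex J.addSubgroup :=
  Nat.card_congr <| Quotient.congr
    (ra := QuotientGroup.leftRel (I.subgroup.subgroupOf J.subgroup))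
    (rb := QuotientAddGroup.leftRel (I.addSubgroup.addSubgroupOf J.addSubgroup))
    (Equiv.refl J) fun a b => by
      rw [QuotientGroup.leftRel_apply, QuotientAddGroup.leftRel_apply]
      exact (I.neg_add_mem_iff_inv_mul_mem a b).symm

namespace PrimeStep

variable {p : ℕ} {J K : BraceIdeal B} {k : B}

protected theorem nsmul_mem (h : PrimeStep p J K) (hk : k ∈ K) : p • k ∈ J := by
  have hmem := (J.addSubgroup.addSubgroupOf K.addSubgroup).nsmul_index_mem ⟨k, hk⟩
  rwa [← AddSubgroup.relIndex, h.relIndex_eq] at hmem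

protected theorem pow_mem (h : PrimeStep p J K) (hk : k ∈ K) : k ^ p ∈ J := by
  have hmem := (J.subgroup.subgroupOf K.subgroup).pow_index_mem ⟨k, hk⟩
  rwa [← Subgroup.relIndex, relIndex_subgroup, h.relIndex_eq] at hmem

theorem add_comm_of_le_socle (h : PrimeStep p J K) (hJ : J ≤ socle B) {a b : B} (ha : a ∈ K)
    (hb : b ∈ K) : a + b = b + a := by
  let N := J.addSubgroup.addSubgroupOf K.addSubgroup
  have : Fact p.Prime := ⟨h.prime⟩
  have : IsAddCyclic (K.addSubgroup ⧸ N) := isAddCyclic_of_prime_card h.relIndex_eq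
  have hcenter : (QuotientAddGroup.mk' N).ker ≤ AddSubgroup.center K.addSubgroup := by
    rw [QuotientAddGroup.ker_mk']
    exact fun j hj => AddSubgroup.mem_center_iff.2 fun k => Subtype.ext ((hJ hj).2 k).symm
  have := (QuotientAddGroup.mk' N).isAddCommutative_of_isAddCyclic_of_ker_le_center hcenter
  exact congrArg Subtype.val (add_comm' (⟨a, ha⟩ : K.addSubgroup) ⟨b, hb⟩)

end PrimeStep

/-- The `n`-th power map transfers additive centrality and the identity `b * x * b⁻¹ = lam b x`
from `n • x ∈ Soc(B)` to `x`; the latter identity forces `lam x` to be trivial. -/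
theorem le_socle_of_nsmul_mem_socle {K : BraceIdeal B} {n : ℕ}
    (hsocle : ∀ x ∈ K, n • x ∈ socle B) (hfix : ∀ k ∈ K, ∀ x ∈ K, lam k (n • x) = n • x)
    (hinj : ∀ x ∈ K, ∀ y ∈ K, n • x = n • y → x = y) : K ≤ socle B := by
  have hcentral (x : B) (hx : x ∈ K) (b : B) : b + x = x + b := by
    have hconj : b + x + -b = x := hinj _ (K.addConj_mem b hx) _ hx (by
      rw [addConj_nsmul, ← (hsocle x hx).2, add_neg_cancel_right])
    rw [← add_neg_eq_iff_eq_add, hconj]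
  have hself (x : B) (hx : x ∈ K) : x ^ n = n • x :=
    pow_eq_nsmul_of_lam_self (hinj _ (K.lam_mem x hx) _ hx (by rw [← lam_nsmul, hfix x hx x hx])) n
  have hconj (b x : B) (hx : x ∈ K) : b * x * b⁻¹ = lam b x := by
    refine hinj _ (K.mulConj_mem b hx) _ (K.lam_mem b hx) ?_
    rw [← hself _ (K.mulConj_mem b hx), conj_pow, hself x hx,
      mul_mul_inv_of_mem_socle (hsocle x hx), lam_nsmul]
  refine fun x hx => ⟨fun b => ?_, fun b => (hcentral x hx b).symm⟩
  have hmul : b * lam b⁻¹ x = x * b := by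
    have h := hconj b _ (K.lam_mem b⁻¹ hx)
    rwa [lam_lam_inv, mul_inv_eq_iff_eq_mul] at h
  rw [mul_eq_add_lam, lam_lam_inv, mul_eq_add_lam, hcentral x hx] at hmul
  exact (add_left_cancel hmul).symm

section InfCyclicThenOddPrime

variable {p : ℕ} {x : B} {J K : BraceIdeal B}

namespace SocleStep

theorem le_socle (h : SocleStep x ⊥ J) : J ≤ socle B :=
  socleMod_bot (B := B) ▸ h.le_socleMod

theorem eq_zero_of_nsmul_eq_zero (h : SocleStep x ⊥ J) {n : ℕ} (hn : n ≠ 0) {y : B} (hy : y ∈ J)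
    (hny : n • y = 0) : y = 0 := by
  have hJ := (socleStep_bot_iff.1 h).1
  obtain ⟨m, rfl⟩ := hJ.le hy
  have hmul : ((n : ℤ) * m) • x = 0 := by rw [mul_zsmul, natCast_zsmul]; exact hny
  have hm := h.eq_zero_of_zsmul_mem _ hmul
  rw [mul_eq_zero, Int.natCast_eq_zero, or_iff_right hn] at hm
  simp only [hm, zero_zsmul]

theorem lam_eq_self_of_odd (hJ : SocleStep x ⊥ J) (hK : PrimeStep p J K) (hp : Odd p) {k y : B}
    (hk : k ∈ K) (hy : y ∈ J) : lam k y = y := by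
  have hzmul := (socleStep_bot_iff.1 hJ).1
  obtain ⟨c, hc : c • x = lam k x⟩ := hzmul.le (J.lam_mem k hJ.mem)
  obtain ⟨n, rfl⟩ := hzmul.le hy
  have hpow : (c ^ p - 1) • x = 0 := by
    rw [sub_zsmul, ← lam_pow_eq_zsmul hc.symm, (hJ.le_socle (hK.pow_mem hk)).1, one_zsmul,
      add_neg_cancel]
  have hc1 : c = 1 := hp.pow_inj.1 (by
    rw [one_pow, ← sub_eq_zero]
    exact hJ.eq_zero_of_zsmul_mem _ hpow)
  have hx : lam k x = x := by rw [← hc, hc1, one_zsmul]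
  change lam k (n • x) = n • x
  rw [lam_zsmul, hx]

theorem infCyclicStep_of_torsionFree (hJ : SocleStep x ⊥ J) (hK : PrimeStep p J K) (hp : Odd p)
    (htf : ∀ k ∈ K, p • k = 0 → k = 0) : InfCyclicStep ⊥ K := by
  have hcomm {a b : B} (ha : a ∈ K) (hb : b ∈ K) : AddCommute a b :=
    hK.add_comm_of_le_socle hJ.le_socle ha hb
  have hinj (a : B) (ha : a ∈ K) (b : B) (hb : b ∈ K) (hab : p • a = p • b) : a = b := by
    refine neg_add_eq_zero.1 (htf _ (K.add_mem (K.neg_mem ha) hb) ?_)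
    rw [(hcomm (K.neg_mem ha) hb).add_nsmul, neg_nsmul, hab, neg_add_cancel]
  have hsocle : K ≤ socle B := le_socle_of_nsmul_mem_socle
    (fun k hk => hJ.le_socle (hK.nsmul_mem hk))
    (fun k hk a ha => hJ.lam_eq_self_of_odd hK hp hk (hK.nsmul_mem ha)) hinj
  let nsmulHom : K.addSubgroup →+ J.addSubgroup :=
    { toFun k := ⟨p • (k : B), hK.nsmul_mem k.2⟩
      map_zero' := Subtype.ext (nsmul_zero p)
      map_add' a b := Subtype.ext ((hcomm a.2 b.2).add_nsmul p) }
  obtain ⟨hJx, horder, -⟩ := socleStep_bot_iff.1 hJ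
  have : IsAddCyclic J.addSubgroup := hJx ▸ inferInstance
  have : IsAddCyclic K.addSubgroup := isAddCyclic_of_injective nsmulHom
    fun a b hab => Subtype.ext (hinj a a.2 b b.2 (congrArg Subtype.val hab))
  obtain ⟨z, hz⟩ := (AddSubgroup.isAddCyclic_iff_exists_zmultiples_eq_top _).1 this
  refine ⟨z, socleStep_bot_iff.2 ⟨hz.symm, ?_, hsocle (hz.le (AddSubgroup.mem_zmultiples z))⟩⟩
  obtain ⟨m, hm : m • z = x⟩ := hz.ge (hK.le hJ.mem)
  rw [addOrderOf_eq_zero_iff] at horder ⊢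
  exact fun hfin => horder (hm ▸ hfin.zsmul)

theorem eq_zero_of_add_pow_eq_one (hJ : SocleStep x ⊥ J) (hK : PrimeStep p J K) (hp : Odd p)
    {j t : B} (hj : j ∈ J) (ht : t ∈ K) (htp : t ^ p = 1) (hjt : (j + t) ^ p = 1) : j = 0 := by
  have hlamj : ∀ y, lam j y = y := (hJ.le_socle hj).1
  have hmul : j * t = j + t := by rw [mul_eq_add_lam, hlamj]
  have hcomm : Commute j t := by
    rw [commute_iff_eq, hmul, mul_eq_add_lam, hJ.lam_eq_self_of_odd hK hp ht hj,
      (hJ.le_socle hj).2]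
  refine hJ.eq_zero_of_nsmul_eq_zero hK.prime.ne_zero hj ?_
  rw [← pow_eq_nsmul_of_lam_self (hlamj j), ← one_eq_zero, ← hjt, ← hmul, hcomm.mul_pow, htp,
    mul_one]

/-- A `p`-torsion element `s` satisfies `s ^ p = 1`. Writing a conjugate of `s` as `j + t = j * t`
with `j ∈ J` and `t` torsion, its `p`-th power is `p • j`, whence `j = 0`. -/
theorem exists_torsion_ideal (hJ : SocleStep x ⊥ J) (hK : PrimeStep p J K) (hp : Odd p)
    {s : B} (hs : s ∈ K) (hps : p • s = 0) (hs0 : s ≠ 0) :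
    ∃ T : BraceIdeal B, J.addSubgroup ⊓ T.addSubgroup = ⊥ ∧
      J.addSubgroup ⊔ T.addSubgroup = K.addSubgroup := by
  let T : AddSubgroup B :=
    { carrier := {k | k ∈ K ∧ p • k = 0}
      zero_mem' := ⟨K.zero_mem, nsmul_zero p⟩
      add_mem' ha hb := ⟨K.add_mem ha.1 hb.1, by
        rw [AddCommute.add_nsmul (hK.add_comm_of_le_socle hJ.le_socle ha.1 hb.1), ha.2, hb.2,
          add_zero]⟩
      neg_mem' ha := ⟨K.neg_mem ha.1, by rw [neg_nsmul, ha.2, neg_zero]⟩ }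
  have hlam (b t : B) (ht : t ∈ T) : lam b t ∈ T :=
    ⟨K.lam_mem b ht.1, by rw [← lam_nsmul, ht.2, lam_zero]⟩
  have haddConj (b t : B) (ht : t ∈ T) : b + t + -b ∈ T :=
    ⟨K.addConj_mem b ht.1, by rw [addConj_nsmul, ht.2, add_zero, add_neg_cancel]⟩
  have htf {j : B} (hj : j ∈ J) (hpj : p • j = 0) : j = 0 :=
    hJ.eq_zero_of_nsmul_eq_zero hK.prime.ne_zero hj hpj
  have hinf : J.addSubgroup ⊓ T = ⊥ := (AddSubgroup.eq_bot_iff_forall _).2 fun j hj =>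
    htf hj.1 hj.2.2
  have hsup : J.addSubgroup ⊔ T = K.addSubgroup := hK.sup_eq (fun t ht => ht.1)
    fun hle => hs0 (htf (hle (⟨hs, hps⟩ : s ∈ T)) hps)
  have hpow (t : B) (ht : t ∈ T) : t ^ p = 1 := by
    have hmem : t ^ p ∈ T := (Subbrace.ofAddSubgroup T hlam).subgroup.pow_mem ht p
    rw [htf (hK.pow_mem ht.1) hmem.2, one_eq_zero]
  have hmulConj (b t : B) (ht : t ∈ T) : b * t * b⁻¹ ∈ T := by
    obtain ⟨j, hj, t', ht', hjt⟩ :=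
      AddSubgroup.mem_sup_of_normal_left.1 (hsup.ge (K.mulConj_mem b ht.1))
    have hj0 : j = 0 := hJ.eq_zero_of_add_pow_eq_one hK hp hj ht'.1 (hpow t' ht') (by
      rw [hjt, conj_pow, hpow t ht, mul_one, mul_inv_cancel])
    rw [← hjt, hj0, zero_add]
    exact ht'
  exact ⟨.ofAddSubgroup T haddConj hmulConj hlam, hinf, hsup⟩

end SocleStep

end InfCyclicThenOddPrime

theorem InfCyclicStep.swap_primeStep {p : ℕ} {I J K : BraceIdeal B} (hIJ : InfCyclicStep I J)
    (hJK : PrimeStep p J K) (hp : Odd p) :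
    InfCyclicStep I K ∨ ∃ T : BraceIdeal B, PrimeStep p I T ∧ InfCyclicStep T K := by
  obtain ⟨x, hx⟩ := hIJ
  have hIK := hx.le.trans hJK.le
  obtain ⟨J, rfl⟩ := exists_comap_quotientMk_eq hx.le
  obtain ⟨K, rfl⟩ := exists_comap_quotientMk_eq hIK
  rw [socleStep_comap_quotientMk_iff] at hx
  rw [primeStep_comap_iff I.quotientMk_surjective] at hJK
  by_cases htf : ∀ k ∈ K, p • k = 0 → k = 0
  · exact .inl (infCyclicStep_comap_quotientMk_iff.2 (hx.infCyclicStep_of_torsionFree hJK hp htf))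
  · push Not at htf
    obtain ⟨s, hs, hps, hs0⟩ := htf
    obtain ⟨T, hinf, hsup⟩ := hx.exists_torsion_ideal hJK hp hs hps hs0
    refine .inr ⟨T.comap I.quotientMk, ?_, ?_⟩
    · rw [primeStep_comap_quotientMk_iff]
      exact (primeStep_iff_of_inf_of_sup (inf_comm _ _ |>.trans hinf)
        (sup_comm _ _ |>.trans hsup)).2 hJK
    · rw [infCyclicStep_comap_iff I.quotientMk_surjective]
      exact ⟨_, hx.of_inf_of_sup hinf hsup⟩

/-! ### Exchanging a factor of order two and an infinite cyclic factor -/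

theorem SocleStep.exists_primeStep_of_bot {p : ℕ} {x : B} {K : BraceIdeal B}
    (hK : SocleStep x ⊥ K) (hp : p.Prime) :
    ∃ C : BraceIdeal B, SocleStep (p • x) ⊥ C ∧ PrimeStep p C K := by
  obtain ⟨hKx, horder, hx⟩ := socleStep_bot_iff.1 hK
  have hpx : p • x ∈ socle B := nsmul_mem hx p
  have hlam (b a : B) (ha : a ∈ AddSubgroup.zmultiples (p • x)) :
      lam b a ∈ AddSubgroup.zmultiples (p • x) := by
    obtain ⟨n, rfl⟩ := ha
    obtain ⟨m, hm : m • x = lam b x⟩ := hKx.le (K.lam_mem b hK.mem)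
    refine ⟨n * m, ?_⟩
    change (n * m) • p • x = lam b (n • p • x)
    rw [lam_zsmul, lam_nsmul, ← hm]
    simp only [← natCast_zsmul, ← mul_zsmul]
    congr 1
    ring
  let C := ofLeSocle (AddSubgroup.zmultiples (p • x))
    (AddSubgroup.zmultiples_le_of_mem (H := (socle B).addSubgroup) hpx) hlam
  have hmem : p • x ∈ C := AddSubgroup.mem_zmultiples (p • x)
  refine ⟨C, socleStep_bot_iff.2 ⟨rfl, ?_, hpx⟩,
    primeStep_iff.2 ⟨?_, hp, x, hK.mem, ?_, hmem, fun y hy => ?_⟩⟩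
  · rw [addOrderOf_eq_zero_iff] at horder ⊢
    exact fun h => horder (h.of_nsmul hp.ne_zero)
  · exact AddSubgroup.zmultiples_le_of_mem (H := K.addSubgroup) (nsmul_mem hK.mem p)
  · rintro ⟨n, hn : n • p • x = x⟩
    have hzero : (n * p - 1) • x = 0 := by
      rw [sub_zsmul, mul_zsmul, natCast_zsmul, hn, one_zsmul, add_neg_cancel]
    have hunit := hK.eq_zero_of_zsmul_mem _ hzero
    exact hp.not_isUnit (Int.ofNat_isUnit.1 (IsUnit.of_mul_eq_one n (by linarith)))
  · obtain ⟨n, rfl⟩ := hKx.le hy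
    exact ⟨n, by rw [neg_add_cancel]; exact C.zero_mem⟩

theorem SocleStep.exists_primeStep {p : ℕ} {x : B} {I K : BraceIdeal B}
    (hIK : SocleStep x I K) (hp : p.Prime) :
    ∃ C : BraceIdeal B, SocleStep (p • x) I C ∧ PrimeStep p C K := by
  obtain ⟨K, rfl⟩ := exists_comap_quotientMk_eq hIK.le
  rw [socleStep_comap_quotientMk_iff] at hIK
  obtain ⟨C, hC, hCK⟩ := hIK.exists_primeStep_of_bot hp
  rw [← map_nsmul, ← socleStep_comap_quotientMk_iff] at hC
  exact ⟨C.comap I.quotientMk, hC, (primeStep_comap_iff I.quotientMk_surjective).2 hCK⟩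

section TwoThenInfCyclic

variable {x : B} {J K A : BraceIdeal B}

namespace PrimeStep

theorem eq_of_eq_zero_iff (hJ : PrimeStep 2 ⊥ J) {a b : B} (ha : a ∈ J) (hb : b ∈ J)
    (hab : a = 0 ↔ b = 0) : a = b := by
  obtain ⟨t, -, ht⟩ := (Nat.card_eq_two_iff' (0 : J.addSubgroup)).1 (primeStep_bot_iff.1 hJ).2
  by_cases ha0 : a = 0
  · rw [ha0, hab.1 ha0]
  · have hat := ht ⟨a, ha⟩ (mt (congrArg Subtype.val) ha0)
    have hbt := ht ⟨b, hb⟩ (mt (congrArg Subtype.val) (mt hab.2 ha0))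
    exact congrArg Subtype.val (hat.trans hbt.symm)

theorem add_self (hJ : PrimeStep 2 ⊥ J) {j : B} (hj : j ∈ J) : j + j = 0 :=
  two_nsmul j ▸ hJ.nsmul_mem hj

theorem lam_eq_self (hJ : PrimeStep 2 ⊥ J) (b : B) {j : B} (hj : j ∈ J) : lam b j = j :=
  hJ.eq_of_eq_zero_iff (J.lam_mem b hj) hj (map_eq_zero_iff (lamHom B b) (lam_injective b))

protected theorem add_comm (hJ : PrimeStep 2 ⊥ J) {j : B} (hj : j ∈ J) (b : B) : j + b = b + j := by
  have hconj : b + j + -b = j :=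
    hJ.eq_of_eq_zero_iff (J.addConj_mem b hj) hj addConj_eq_zero_iff
  rw [← add_neg_eq_iff_eq_add.1 hconj]

theorem exists_mul_self_eq (hx : x ∈ J.socleMod) : ∃ j ∈ J, x * x = 2 • x + j :=
  ⟨-x + lam x x, (mem_socleMod.1 hx).2.1 x trivial, by
    rw [mul_eq_add_lam, two_nsmul, add_assoc, add_neg_cancel_left]⟩

theorem two_nsmul_add_comm (hJ : PrimeStep 2 ⊥ J) (hx : x ∈ J.socleMod) (b : B) :
    2 • x + b = b + 2 • x := by
  obtain ⟨i, hi, hib⟩ : ∃ i ∈ J, x + b = b + x + i :=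
    ⟨_, (mem_socleMod.1 hx).2.2 b trivial, (add_neg_cancel_left _ _).symm⟩
  calc 2 • x + b = x + (b + x + i) := by rw [two_nsmul, add_assoc, hib]
    _ = x + b + (x + i) := by simp only [add_assoc]
    _ = b + 2 • x + (i + i) := by
        rw [hib, add_assoc (b + x), ← add_assoc i, hJ.add_comm hi, two_nsmul]
        simp only [add_assoc]
    _ = b + 2 • x := by rw [hJ.add_self hi, add_zero]

/-- Modulo `J` the element `x` lies in the socle, and the error terms, being central,
`λ`-invariant and of order two, cancel when `x` is taken twice. -/
theorem mul_self_mem_socle (hJ : PrimeStep 2 ⊥ J) (hx : x ∈ J.socleMod) : x * x ∈ socle B := by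
  refine ⟨fun b => ?_, fun b => ?_⟩
  · obtain ⟨i, hi, hib⟩ : ∃ i ∈ J, lam x b = b + i :=
      ⟨_, (mem_socleMod.1 hx).2.1 b trivial, (add_neg_cancel_left _ _).symm⟩
    rw [lam_mul, hib, lam_add, hib, hJ.lam_eq_self x hi, add_assoc, hJ.add_self hi, add_zero]
  · obtain ⟨j, hj, hjx⟩ := exists_mul_self_eq hx
    rw [hjx, add_assoc, hJ.add_comm hj, ← add_assoc, hJ.two_nsmul_add_comm hx, add_assoc]

theorem nsmul_nsmul_mem_socle (hJ : PrimeStep 2 ⊥ J) (hx : x ∈ J.socleMod) :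
    2 • 2 • x ∈ socle B := by
  obtain ⟨j, hj, hjx⟩ := exists_mul_self_eq hx
  have hcomm : AddCommute (2 • x) j := (hJ.add_comm hj _).symm
  have hmem := nsmul_mem (hJ.mul_self_mem_socle hx) 2
  rwa [hjx, hcomm.add_nsmul, two_nsmul j, hJ.add_self hj, add_zero] at hmem

theorem lam_nsmul_nsmul_mem_zmultiples (hJ : PrimeStep 2 ⊥ J) (hJK : SocleStep x J K) (b : B) :
    lam b (2 • 2 • x) ∈ AddSubgroup.zmultiples (2 • 2 • x) := by
  obtain ⟨n, hn⟩ := hJK.exists_zsmul _ (K.lam_mem b hJK.mem)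
  obtain ⟨j, hj, hbx⟩ : ∃ j ∈ J, lam b x = n • x + j :=
    ⟨_, hn, (add_neg_cancel_left _ _).symm⟩
  have hcomm : AddCommute (n • x) j := (hJ.add_comm hj _).symm
  refine ⟨n, ?_⟩
  calc n • 2 • 2 • x = 2 • 2 • n • x := by
        simp only [← natCast_zsmul, ← mul_zsmul]
        congr 1
        ring
    _ = lam b (2 • 2 • x) := by
        rw [lam_nsmul, lam_nsmul, hbx, hcomm.add_nsmul, two_nsmul j, hJ.add_self hj, add_zero]

theorem exists_infCyclicStep (hJ : PrimeStep 2 ⊥ J) (hJK : SocleStep x J K)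
    (hJA : SocleStep (2 • 2 • x) J A) :
    ∃ M : BraceIdeal B, InfCyclicStep ⊥ M ∧ PrimeStep 2 M A := by
  have hx : 2 • 2 • x ∈ socle B := hJ.nsmul_nsmul_mem_socle (hJK.le_socleMod hJK.mem)
  let M := ofLeSocle (AddSubgroup.zmultiples (2 • 2 • x))
    (AddSubgroup.zmultiples_le_of_mem (H := (socle B).addSubgroup) hx) fun b a ha => by
      obtain ⟨n, rfl⟩ := ha
      exact (lam_zsmul b n (2 • 2 • x)).symm ▸
        zsmul_mem (hJ.lam_nsmul_nsmul_mem_zmultiples hJK b) n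
  have hfree (n : ℤ) (hn : n • 2 • 2 • x ∈ J) : n = 0 := hJA.eq_zero_of_zsmul_mem n hn
  have horder : addOrderOf (2 • 2 • x) = 0 := by
    rw [addOrderOf_eq_zero_iff, isOfFinAddOrder_iff_zsmul_eq_zero]
    rintro ⟨n, hn0, hn⟩
    exact hn0 (hfree n (hn ▸ J.zero_mem))
  have hinf : J.addSubgroup ⊓ M.addSubgroup = ⊥ := by
    rw [AddSubgroup.eq_bot_iff_forall]
    rintro _ ⟨hy, n, rfl⟩
    change n • 2 • 2 • x = 0
    rw [hfree n hy, zero_zsmul]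
  have hsup : J.addSubgroup ⊔ M.addSubgroup = A.addSubgroup := by
    refine le_antisymm (sup_le hJA.le (AddSubgroup.zmultiples_le_of_mem hJA.mem)) fun y hy => ?_
    obtain ⟨n, hn⟩ := hJA.exists_zsmul y hy
    rw [← add_neg_cancel_left (n • 2 • 2 • x) y]
    exact add_mem (AddSubgroup.mem_sup_right ⟨n, rfl⟩) (AddSubgroup.mem_sup_left hn)
  exact ⟨M, ⟨_, socleStep_bot_iff.2 ⟨rfl, horder, hx⟩⟩,
    (primeStep_iff_of_inf_of_sup hinf hsup).1 hJ⟩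

end PrimeStep

theorem PrimeStep.exists_swap_infCyclicStep {I : BraceIdeal B} (hIJ : PrimeStep 2 I J)
    (hJK : InfCyclicStep J K) :
    ∃ M A C : BraceIdeal B,
      InfCyclicStep I M ∧ PrimeStep 2 M A ∧ PrimeStep 2 A C ∧ PrimeStep 2 C K := by
  obtain ⟨x, hJK⟩ := hJK
  obtain ⟨C, hJC, hCK⟩ := hJK.exists_primeStep Nat.prime_two
  obtain ⟨A, hJA, hAC⟩ := hJC.exists_primeStep Nat.prime_two
  have hIK := hIJ.le.trans hJK.le
  have hIA := hIJ.le.trans hJA.le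
  obtain ⟨J, rfl⟩ := exists_comap_quotientMk_eq hIJ.le
  obtain ⟨K, rfl⟩ := exists_comap_quotientMk_eq hIK
  obtain ⟨A, rfl⟩ := exists_comap_quotientMk_eq hIA
  have hsurj := I.quotientMk_surjective
  rw [primeStep_comap_quotientMk_iff] at hIJ
  rw [socleStep_comap_iff hsurj] at hJK
  rw [socleStep_comap_iff hsurj, map_nsmul, map_nsmul] at hJA
  obtain ⟨M, hM, hMA⟩ := hIJ.exists_infCyclicStep hJK hJA
  exact ⟨M.comap I.quotientMk, A.comap I.quotientMk, C,
    infCyclicStep_comap_quotientMk_iff.2 hM, (primeStep_comap_iff hsurj).2 hMA, hAC, hCK⟩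

end TwoThenInfCyclic

end BraceIdeal

/-! ### Rearranging chains -/

section Rewriting

open Relation

variable {α : Type*} {r s t : α → α → Prop} {a b c d : α}

theorem exists_reflGen_reflTransGen_of_swap
    (hswap : ∀ a b c, s a b → r b c → ∃ d, ReflGen r a d ∧ ReflTransGen s d c)
    (hab : ReflTransGen s a b) (hbc : r b c) : ∃ d, ReflGen r a d ∧ ReflTransGen s d c := by
  induction hab using ReflTransGen.head_induction_on with
  | refl => exact ⟨c, .single hbc, .refl⟩
  | head haa' _ ih =>
    obtain ⟨d, hd, hdc⟩ := ih
    cases hd with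
    | refl => exact ⟨_, .refl, .head haa' hdc⟩
    | single ha'd =>
      obtain ⟨e, hae, hed⟩ := hswap _ _ _ haa' ha'd
      exact ⟨e, hae, hed.trans hdc⟩

theorem exists_extension_of_reflTransGen (f : ℕ → α) (k : ℕ) (h : ReflTransGen r (f k) b) :
    ∃ (m : ℕ) (F : ℕ → α), (∀ i ≤ k, F i = f i) ∧ F (k + m) = b ∧
      ∀ i, k ≤ i → i < k + m → r (F i) (F (i + 1)) := by
  induction h with
  | refl => exact ⟨0, f, fun _ _ => rfl, rfl, by lia⟩
  | @tail b c _ hbc ih =>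
    obtain ⟨m, F, hF, hb, hstep⟩ := ih
    have hold (i : ℕ) (hi : i ≤ k + m) : Function.update F (k + m + 1) c i = F i :=
      Function.update_of_ne (by lia) _ _
    refine ⟨m + 1, Function.update F (k + m + 1) c, fun i hi => ?_, Function.update_self ..,
      fun i hki hi => ?_⟩
    · rw [hold i (by lia), hF i hi]
    · obtain hlt | rfl : i < k + m ∨ i = k + m := by lia
      · rw [hold i hlt.le, hold (i + 1) hlt]
        exact hstep i hki hlt
      · rwa [hold _ le_rfl, hb, Function.update_self]

theorem exists_seq_of_reflTransGen (hab : ReflTransGen r a b) (hbc : ReflTransGen s b c)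
    (hcd : ReflTransGen t c d) :
    ∃ (k m n : ℕ) (F : ℕ → α), F 0 = a ∧ F (k + m + n) = d ∧
      (∀ i < k, r (F i) (F (i + 1))) ∧
      (∀ i, k ≤ i → i < k + m → s (F i) (F (i + 1))) ∧
      ∀ i, k + m ≤ i → i < k + m + n → t (F i) (F (i + 1)) := by
  obtain ⟨k, F, hF, hb, hr⟩ := exists_extension_of_reflTransGen (fun _ => a) 0 hab
  rw [Nat.zero_add] at hb hr
  obtain ⟨m, G, hG, hc, hs⟩ := exists_extension_of_reflTransGen F k (hb ▸ hbc)
  obtain ⟨n, H, hH, hd, ht⟩ := exists_extension_of_reflTransGen G (k + m) (hc ▸ hcd)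
  have hHF (i : ℕ) (hi : i ≤ k) : H i = F i := (hH i (by lia)).trans (hG i hi)
  refine ⟨k, m, n, H, (hHF 0 k.zero_le).trans (hF 0 le_rfl), hd, fun i hi => ?_,
    fun i hki hi => ?_, ht⟩
  · rw [hHF i hi.le, hHF (i + 1) hi]
    exact hr i i.zero_le hi
  · rw [hH i hi.le, hH (i + 1) hi]
    exact hs i hki hi

end Rewriting

namespace BraceIdeal

open Relation

variable {B : Type*} [SkewBrace B] {I J K : BraceIdeal B}

/-- A step of the chains that define supersolubility. -/
def SupersolubleStep (I J : BraceIdeal B) : Prop :=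
  InfCyclicStep I J ∨ ∃ p, PrimeStep p I J

/-- `PrimeStep` for some odd prime. -/
def OddPrimeStep (I J : BraceIdeal B) : Prop :=
  ∃ p, Odd p ∧ PrimeStep p I J

theorem exists_odd_infCyclic_two_of_supersoluble (h : ReflTransGen SupersolubleStep I K) :
    ∃ X Y, ReflTransGen OddPrimeStep I X ∧ ReflTransGen InfCyclicStep X Y ∧
      ReflTransGen (PrimeStep 2) Y K := by
  have two_odd (I J K : BraceIdeal B) (hIJ : PrimeStep 2 I J) (hJK : OddPrimeStep J K) :
      ∃ D, ReflGen OddPrimeStep I D ∧ ReflTransGen (PrimeStep 2) D K := by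
    obtain ⟨p, hodd, hp⟩ := hJK
    have hlt : 2 < p := hp.prime.two_le.lt_of_ne (by rintro rfl; exact absurd hodd (by decide))
    obtain ⟨D, hID, hDK⟩ := hIJ.exists_swap hp hlt
    exact ⟨D, .single ⟨p, hodd, hID⟩, .single hDK⟩
  have two_infCyclic (I J K : BraceIdeal B) (hIJ : PrimeStep 2 I J) (hJK : InfCyclicStep J K) :
      ∃ D, ReflGen InfCyclicStep I D ∧ ReflTransGen (PrimeStep 2) D K := by
    obtain ⟨D, E, F, hID, hDE, hEF, hFK⟩ := hIJ.exists_swap_infCyclicStep hJK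
    exact ⟨D, .single hID, .head hDE (.head hEF (.single hFK))⟩
  have infCyclic_odd (I J K : BraceIdeal B) (hIJ : InfCyclicStep I J) (hJK : OddPrimeStep J K) :
      ∃ D, ReflGen OddPrimeStep I D ∧ ReflTransGen InfCyclicStep D K := by
    obtain ⟨p, hodd, hp⟩ := hJK
    rcases hIJ.swap_primeStep hp hodd with hIK | ⟨D, hID, hDK⟩
    · exact ⟨I, .refl, .single hIK⟩
    · exact ⟨D, .single ⟨p, hodd, hID⟩, .single hDK⟩
  induction h with
  | refl => exact ⟨I, I, .refl, .refl, .refl⟩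
  | tail _ hJK ih =>
    obtain ⟨X, Y, hIX, hXY, hYJ⟩ := ih
    rcases hJK with hinf | ⟨p, hp⟩
    · obtain ⟨Y', hYY', hY'K⟩ := exists_reflGen_reflTransGen_of_swap two_infCyclic hYJ hinf
      exact ⟨X, Y', hIX, hXY.trans hYY'.to_reflTransGen, hY'K⟩
    obtain rfl | hodd := hp.prime.eq_two_or_odd'
    · exact ⟨X, Y, hIX, hXY, hYJ.tail hp⟩
    obtain ⟨Y', hYY', hY'K⟩ := exists_reflGen_reflTransGen_of_swap two_odd hYJ ⟨p, hodd, hp⟩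
    cases hYY' with
    | refl => exact ⟨X, Y, hIX, hXY, hY'K⟩
    | single hYY' =>
      obtain ⟨X', hXX', hXY'⟩ := exists_reflGen_reflTransGen_of_swap infCyclic_odd hXY hYY'
      exact ⟨X', Y', hIX.trans hXX'.to_reflTransGen, hXY', hY'K⟩

/-- Pairs of an ideal and an odd prime, where the latter bounds the orders of all factors that may
still follow: chains of such steps are exactly those with nonincreasing odd prime orders. -/
def DescendingOddStep (x y : BraceIdeal B × ℕ) : Prop :=
  PrimeStep y.2 x.1 y.1 ∧ Odd y.2 ∧ y.2 ≤ x.2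

/-- Insertion sort: a leading factor of order `p` is moved past all larger ones. -/
theorem PrimeStep.exists_descendingOddStep {p : ℕ} (hIJ : PrimeStep p I J) (hp : Odd p)
    {x y : BraceIdeal B × ℕ} (hx : x.1 = J) (hxy : ReflTransGen DescendingOddStep x y) :
    ∃ q, ReflTransGen DescendingOddStep (I, max p x.2) (y.1, q) := by
  induction hxy using ReflTransGen.head_induction_on generalizing I J with
  | refl => exact ⟨p, .single ⟨hx ▸ hIJ, hp, le_max_left _ _⟩⟩
  | @head x z hxz hzy ih =>
    obtain ⟨hJz, hodd, hle⟩ := hxz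
    subst hx
    rcases le_or_gt z.2 p with hzp | hpz
    · exact ⟨y.2, .head (b := (x.1, p)) ⟨hIJ, hp, le_max_left _ _⟩
        (.head ⟨hJz, hodd, hzp⟩ hzy)⟩
    · obtain ⟨D, hID, hDz⟩ := hIJ.exists_swap hJz hpz
      obtain ⟨q, hq⟩ := ih hDz rfl
      rw [max_eq_right hpz.le] at hq
      exact ⟨q, .head (b := (D, z.2)) ⟨hID, hodd, hle.trans (le_max_right _ _)⟩ hq⟩

theorem exists_descendingOddStep (h : ReflTransGen OddPrimeStep I J) :
    ∃ m n, ReflTransGen DescendingOddStep (I, m) (J, n) := by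
  induction h using ReflTransGen.head_induction_on with
  | refl => exact ⟨0, 0, .refl⟩
  | head hstep _ ih =>
    obtain ⟨p, hodd, hp⟩ := hstep
    obtain ⟨m, n, hmn⟩ := ih
    exact ⟨_, hp.exists_descendingOddStep hodd rfl hmn⟩

end BraceIdeal

open Relation BraceIdeal Function in
theorem IsSupersoluble.exists_reflTransGen {B : Type*} [SkewBrace B] (hB : IsSupersoluble B) :
    ∃ I J : BraceIdeal B, I.carrier = {0} ∧ J.carrier = Set.univ ∧
      ReflTransGen SupersolubleStep I J := by
  obtain ⟨n, I, hbot, htop, hle, hstep⟩ := hB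
  have hchain : ReflTransGen (SupersolubleStep on I) 0 n := by
    refine reflTransGen_of_succ_of_le _ (fun i hi => ?_) n.zero_le
    rcases hstep i hi.2 with hinf | ⟨p, hp⟩
    · exact .inl (infCyclicStep_iff.2 ⟨hle i hi.2, hinf⟩)
    · exact .inr ⟨p, primeStep_iff.2 ⟨hle i hi.2, hp⟩⟩
  exact ⟨I 0, I n, hbot, htop, hchain.lift I le_rfl⟩

open BraceIdeal in
/-- **Sylow tower theorem for supersoluble braces.**
A supersoluble brace `B` has a finite chain of ideals
`{0} = I 0 ≤ … ≤ I ℓ ≤ … ≤ I (ℓ+m) ≤ … ≤ I (ℓ+m+n) = B` such that the first `ℓ`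
factors have odd prime orders, arranged in decreasing magnitude, the middle `m`
factors are additively infinite cyclic and contained in the socle of the
corresponding quotient of `B`, and the last `n` factors have order `2`. -/
theorem supersoluble_sylow_tower (B : Type*) [SkewBrace B] (hB : IsSupersoluble B) :
    ∃ (ℓ m n : ℕ) (I : ℕ → BraceIdeal B) (p : ℕ → ℕ),
      (I 0).carrier = {0} ∧ (I (ℓ + m + n)).carrier = Set.univ ∧
      (∀ i, i < ℓ + m + n → (I i).carrier ⊆ (I (i + 1)).carrier) ∧
      (∀ i, i < ℓ →
        Odd (p i) ∧ QuotPrimeOrder (I i).carrier (I (i + 1)).carrier (p i)) ∧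
      (∀ i, i + 1 < ℓ → p (i + 1) ≤ p i) ∧
      (∀ i, ℓ ≤ i → i < ℓ + m →
        QuotAddInfCyclic (I i).carrier (I (i + 1)).carrier ∧
          ∀ x ∈ (I (i + 1)).carrier, MemSocQuot (I i).carrier x) ∧
      (∀ i, ℓ + m ≤ i → i < ℓ + m + n →
        QuotPrimeOrder (I i).carrier (I (i + 1)).carrier 2) := by
  obtain ⟨I, J, hbot, htop, hIJ⟩ := hB.exists_reflTransGen
  obtain ⟨X, Y, hIX, hXY, hYJ⟩ := exists_odd_infCyclic_two_of_supersoluble hIJ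
  obtain ⟨q, q', hIX⟩ := exists_descendingOddStep hIX
  obtain ⟨ℓ, m, n, F, hF, hF', hodd, hinf, htwo⟩ := exists_seq_of_reflTransGen hIX
    (hXY.lift (p := fun x y => InfCyclicStep x.1 y.1) (·, q') le_rfl)
    (hYJ.lift (p := fun x y => PrimeStep 2 x.1 y.1) (·, q') le_rfl)
  refine ⟨ℓ, m, n, fun i => (F i).1, fun i => (F (i + 1)).2,
    (congrArg (·.1.carrier) hF).trans hbot, (congrArg (·.1.carrier) hF').trans htop,
    fun i hi => ?_, fun i hi => ⟨(hodd i hi).2.1, (primeStep_iff.1 (hodd i hi).1).2⟩,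
    fun i hi => (hodd (i + 1) hi).2.2,
    fun i hi hi' => (infCyclicStep_iff.1 (hinf i hi hi')).2,
    fun i hi hi' => (primeStep_iff.1 (htwo i hi hi')).2⟩
  rcases lt_or_ge i ℓ with hiℓ | hiℓ
  · exact (hodd i hiℓ).1.le
  rcases lt_or_ge i (ℓ + m) with him | him
  · exact (infCyclicStep_iff.1 (hinf i hiℓ him)).1
  · exact (htwo i him hi).le

end SkewBrace
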